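/- arXiv:1511.05583 — 5 statements merged into one kernel-verified Lean document; each statement's English description precedes it below -/
import Mathlib

section
/- Let P ≥ 1 and 1 ≤ p ≤ P be integers and let t be a real number. Let μ_{a,m}^{⊗P} denote the P-fold product of μ_{a,m} on ℝ^P. Then the probability that at least p of the P coordinates exceed t (the outage event of the p-th ordered user in Theorem 1) satisfies μ_{a,m}^{⊗P}({x ∈ ℝ^P : #{i : x_i > t} ≥ p}) = ∑_{i=0}^{p-1} C(p-1,i) (-1)^i π_p^P (1 - F_{a,m}(t)^{P-p+i+1})/(P-p+i+1), where π_p^P = P!/((P-p)!(p-1)!) and C(p-1,i) is the binomial coefficient. -/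
open MeasureTheory

/-- The inverse-gamma density with shape `m+1` and scale `1/a`:
`f a m x = x^{-(m+2)} e^{-1/(a x)} / (m! a^{m+1})` for `x > 0`, and `0` otherwise. -/
noncomputable def invGammaDensity (a : ℝ) (m : ℕ) (x : ℝ) : ℝ :=
  if 0 < x then x ^ (-((m : ℤ) + 2)) * Real.exp (-(1 / (a * x))) / (m.factorial * a ^ (m + 1))
  else 0

/-- The inverse-gamma probability measure `μ_{a,m}` on `ℝ`. -/
noncomputable def invGammaMeasure (a : ℝ) (m : ℕ) : Measure ℝ :=
  volume.withDensity (fun x => ENNReal.ofReal (invGammaDensity a m x))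

/-- The CDF `F_{a,m}(t) = μ_{a,m}((-∞, t])` of the inverse-gamma law. -/
noncomputable def invGammaCDF (a : ℝ) (m : ℕ) (t : ℝ) : ℝ :=
  (invGammaMeasure a m (Set.Iic t)).toReal

lemma invGamma_integral (a : ℝ) (ha : 0 < a) (m : ℕ) :
    ∫ x, invGammaDensity a m x = 1 := by
  have h1 : ∫ x, invGammaDensity a m x = ∫ x in Set.Ioi (0:ℝ), invGammaDensity a m x := by
    rw [← integral_indicator measurableSet_Ioi]
    congr 1
    ext x
    by_cases hx : 0 < x <;> simp [Set.indicator, hx, invGammaDensity]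
  have h2 := integral_comp_rpow_Ioi (fun y : ℝ => y ^ ((m + 1 : ℝ) - 1) * Real.exp (-(1 / a * y)) / (m.factorial * a ^ (m + 1))) (p := -1) (by norm_num)
  rw [integral_div, Real.integral_rpow_mul_exp_neg_mul_Ioi (by positivity) (by positivity),
    Real.Gamma_nat_eq_factorial] at h2
  rw [h1]
  trans (1 / (1 / a)) ^ (m + 1 : ℝ) * (m.factorial : ℝ) / (m.factorial * a ^ (m + 1))
  · rw [← h2]
    refine setIntegral_congr_fun measurableSet_Ioi fun x hx => ?_
    have hx : 0 < x := hx
    simp only [invGammaDensity, hx, if_true, smul_eq_mul]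
    have e1 : x ^ (-((m : ℤ) + 2)) = x ^ (-1 - 1 : ℝ) * (x ^ (-1 : ℝ)) ^ ((m + 1 : ℝ) - 1) := by
      rw [← Real.rpow_intCast, ← Real.rpow_mul hx.le, ← Real.rpow_add hx]
      congr 1
      push_cast; ring
    rw [e1, Real.rpow_neg_one]
    have e2 : 1 / (a * x) = 1 / a * x⁻¹ := by field_simp
    rw [e2]
    norm_num
    ring
  · have : (1 / (1 / a)) ^ (m + 1 : ℝ) = a ^ (m + 1) := by
      rw [one_div_one_div]; exact_mod_cast Real.rpow_natCast a (m + 1)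
    rw [this]
    field_simp

lemma invGamma_prob (a : ℝ) (ha : 0 < a) (m : ℕ) :
    IsProbabilityMeasure (invGammaMeasure a m) := by
  constructor
  have h := invGamma_integral a ha m
  have hi : Integrable (invGammaDensity a m) := by
    by_contra hc
    rw [integral_undef hc] at h
    norm_num at h
  rw [invGammaMeasure, withDensity_apply _ MeasurableSet.univ, Measure.restrict_univ,
    ← ofReal_integral_eq_lintegral_ofReal hi, h, ENNReal.ofReal_one]
  refine Filter.Eventually.of_forall fun x => ?_
  simp only [invGammaDensity, Pi.zero_apply]
  split_ifs <;> positivity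

lemma prob_tail (μ : Measure ℝ) [IsProbabilityMeasure μ] (P p : ℕ) (t : ℝ) :
    ((Measure.pi (fun _ : Fin P => μ))
        {x : Fin P → ℝ | p ≤ (Finset.univ.filter (fun i => t < x i)).card}).toReal
      = ∑ j ∈ Finset.range (P + 1), (P.choose j : ℝ) *
        (if p ≤ j then (1 - μ.real (Set.Iic t)) ^ j * μ.real (Set.Iic t) ^ (P - j) else 0) := by
  classical
  set B : Finset (Fin P) → Set (Fin P → ℝ) := fun S =>
    Set.univ.pi fun i => if i ∈ S then Set.Ioi t else Set.Iic t with hB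
  have hmem : ∀ S x, x ∈ B S ↔ Finset.univ.filter (fun i => t < x i) = S := by
    intro S x
    simp only [hB, Set.mem_univ_pi, Finset.ext_iff, Finset.mem_filter, Finset.mem_univ, true_and]
    refine forall_congr' fun i => ?_
    by_cases hi : i ∈ S <;> simp [hi]
  have hset : {x : Fin P → ℝ | p ≤ (Finset.univ.filter (fun i => t < x i)).card}
      = ⋃ S ∈ (Finset.univ : Finset (Finset (Fin P))).filter (fun S => p ≤ S.card), B S := by
    ext x
    simp [hmem]
  have hmeas : ∀ S, MeasurableSet (B S) := fun S =>
    MeasurableSet.univ_pi fun i => by split_ifs <;> measurability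
  have hq : μ.real (Set.Ioi t) = 1 - μ.real (Set.Iic t) := by
    rw [← Set.compl_Iic, probReal_compl_eq_one_sub measurableSet_Iic]
  have hval : ∀ S, (Measure.pi (fun _ : Fin P => μ)).real (B S) =
      (1 - μ.real (Set.Iic t)) ^ S.card * μ.real (Set.Iic t) ^ (P - S.card) := by
    intro S
    rw [← hq, measureReal_def, hB, Measure.pi_pi, ENNReal.toReal_prod]
    have : ∀ i, (μ (if i ∈ S then Set.Ioi t else Set.Iic t)).toReal
        = if i ∈ S then μ.real (Set.Ioi t) else μ.real (Set.Iic t) := by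
      intro i; split_ifs <;> rfl
    simp only [this]
    rw [Finset.prod_ite, Finset.prod_const, Finset.prod_const]
    congr 2
    · simp
    · rw [Finset.filter_not, Finset.card_sdiff]; simp
  rw [← measureReal_def, hset, measureReal_biUnion_finset, Finset.sum_filter]
  · simp only [hval]
    have := Finset.sum_powerset_apply_card (x := (Finset.univ : Finset (Fin P))) (fun j => if p ≤ j then (1 - μ.real (Set.Iic t)) ^ j * μ.real (Set.Iic t) ^ (P - j) else 0)
    simpa only [Finset.powerset_univ, Finset.card_univ, Fintype.card_fin, nsmul_eq_mul] using this
  · intro S _ T _ hST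
    refine Set.disjoint_left.2 fun x h1 h2 => hST ?_
    rw [hmem] at h1 h2
    rw [← h1, h2]
  · exact fun S _ => hmeas S

lemma tail_deriv (P : ℕ) (k : ℕ) : ∀ s, s + k = P → ∀ x : ℝ,
    HasDerivAt (fun x : ℝ => ∑ j ∈ Finset.range (P + 1), (P.choose j : ℝ) *
        (if s + 1 ≤ j then (1 - x) ^ j * x ^ (P - j) else 0))
      (-((s + 1) * P.choose (s + 1) * x ^ (P - (s + 1)) * (1 - x) ^ s)) x := by
  induction k with
  | zero =>
    rintro s rfl x
    have : (fun x : ℝ => ∑ j ∈ Finset.range (s + 0 + 1), ((s + 0).choose j : ℝ) *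
        (if s + 1 ≤ j then (1 - x) ^ j * x ^ (s + 0 - j) else 0)) = fun _ => 0 := by
      ext x
      refine Finset.sum_eq_zero fun j hj => ?_
      rw [if_neg (by simp at hj; omega), mul_zero]
    rw [this]
    simpa using hasDerivAt_const x (0 : ℝ)
  | succ k ih =>
    intro s hs x
    have h := ih (s + 1) (by omega) x
    have heq : (fun x : ℝ => ∑ j ∈ Finset.range (P + 1), (P.choose j : ℝ) *
        (if s + 1 ≤ j then (1 - x) ^ j * x ^ (P - j) else 0)) = fun x =>
        (∑ j ∈ Finset.range (P + 1), (P.choose j : ℝ) *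
        (if s + 1 + 1 ≤ j then (1 - x) ^ j * x ^ (P - j) else 0)) +
        (P.choose (s + 1) : ℝ) * ((1 - x) ^ (s + 1) * x ^ (P - (s + 1))) := by
      ext x
      have : (P.choose (s + 1) : ℝ) * ((1 - x) ^ (s + 1) * x ^ (P - (s + 1))) =
        ∑ j ∈ Finset.range (P + 1), if s + 1 = j then (P.choose j : ℝ) * ((1 - x) ^ j * x ^ (P - j)) else 0 := by
        rw [Finset.sum_ite_eq, if_pos (by simp; omega)]
      rw [this, ← Finset.sum_add_distrib]
      refine Finset.sum_congr rfl fun j _ => ?_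
      rcases lt_trichotomy (s + 1) j with h | h | h
      · rw [if_pos h.le, if_pos (by omega), if_neg h.ne, add_zero]
      · rw [if_pos h.le, if_neg (by omega), if_pos h]; ring
      · rw [if_neg (by omega), if_neg (by omega), if_neg (by omega)]; ring
    rw [heq]
    have hd : HasDerivAt (fun x : ℝ => 1 - x) (-1) x := by
      simpa using (hasDerivAt_id x).const_sub 1
    have h3 := h.add (((hd.pow (s + 1)).mul (hasDerivAt_pow (P - (s + 1)) x)).const_mul (P.choose (s + 1) : ℝ))
    refine h3.congr_deriv ?_
    have hc : (P.choose (s + 1 + 1) : ℝ) * ((s : ℝ) + 1 + 1) = P.choose (s + 1) * ((P - (s + 1) : ℕ) : ℝ) := by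
      exact_mod_cast Nat.choose_succ_right_eq P (s + 1)
    rw [show P - (s + 1 + 1) = P - (s + 1) - 1 by omega]
    simp only [Pi.pow_apply, Nat.add_sub_cancel]
    push_cast
    linear_combination (-(x ^ (P - (s + 1) - 1) * (1 - x) ^ (s + 1))) * hc

lemma rhs_deriv (s d : ℕ) (c x : ℝ) :
    HasDerivAt (fun x : ℝ => ∑ i ∈ Finset.range (s + 1),
          (s.choose i : ℝ) * (-1) ^ i * c * (1 - x ^ (d + i + 1)) / ((d + i + 1 : ℕ) : ℝ))
      (-(c * x ^ d * (1 - x) ^ s)) x := by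
  have : -(c * x ^ d * (1 - x) ^ s) = ∑ i ∈ Finset.range (s + 1),
      (s.choose i : ℝ) * (-1) ^ i * c * (-(((d + i + 1 : ℕ) : ℝ) * x ^ (d + i))) / ((d + i + 1 : ℕ) : ℝ) := by
    rw [show 1 - x = -x + 1 by ring, add_pow, Finset.mul_sum, ← Finset.sum_neg_distrib]
    refine Finset.sum_congr rfl fun i _ => ?_
    have : ((d + i + 1 : ℕ) : ℝ) ≠ 0 := by positivity
    field_simp
    rw [neg_pow x]
    ring
  rw [this]
  refine HasDerivAt.fun_sum fun i _ => ?_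
  refine HasDerivAt.div_const (HasDerivAt.const_mul _ ?_) _
  simpa using (hasDerivAt_pow (d + i + 1) x).const_sub 1

lemma tail_identity (P s : ℕ) (hs : s + 1 ≤ P) (x : ℝ) :
    ∑ j ∈ Finset.range (P + 1), (P.choose j : ℝ) *
        (if s + 1 ≤ j then (1 - x) ^ j * x ^ (P - j) else 0) =
    ∑ i ∈ Finset.range (s + 1), (s.choose i : ℝ) * (-1) ^ i *
      ((P.factorial : ℝ) / (((P - (s + 1)).factorial : ℝ) * (s.factorial : ℝ))) *
      (1 - x ^ (P - (s + 1) + i + 1)) / ((P - (s + 1) + i + 1 : ℕ) : ℝ) := by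
  set c := ((P.factorial : ℝ) / (((P - (s + 1)).factorial : ℝ) * (s.factorial : ℝ))) with hc
  have hcc : c = (s + 1) * P.choose (s + 1) := by
    rw [hc, Nat.cast_choose ℝ hs, Nat.factorial_succ]
    push_cast
    field_simp
  have hd : ∀ y, HasDerivAt _ _ y := fun y =>
    (tail_deriv P (P - s) s (by omega) y).sub (rhs_deriv s (P - (s + 1)) c y)
  have hconst := is_const_of_deriv_eq_zero (fun y => (hd y).differentiableAt)
    (fun y => by rw [(hd y).deriv, hcc]; ring) x 1
  simp only [Pi.sub_apply] at hconst
  rw [← sub_eq_zero, hconst, sub_eq_zero]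
  trans (0 : ℝ)
  · refine Finset.sum_eq_zero fun j _ => ?_
    split_ifs with h
    · rw [sub_self, zero_pow (by omega)]; ring
    · simp
  · simp

/-- Outage probability of the `p`-th ordered user (Theorem 1): under the `P`-fold product
of `μ_{a,m}`, the probability that at least `p` of the `P` coordinates exceed `t` equals
`∑_{i=0}^{p-1} C(p-1,i) (-1)^i π_p^P (1 - F_{a,m}(t)^{P-p+i+1})/(P-p+i+1)`,
where `π_p^P = P!/((P-p)!(p-1)!)`. -/
theorem outage_probability_ordered_user (a : ℝ) (ha : 0 < a) (m : ℕ)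
    (P p : ℕ) (hP : 1 ≤ P) (hp : 1 ≤ p) (hpP : p ≤ P) (t : ℝ) :
    ((Measure.pi (fun _ : Fin P => invGammaMeasure a m))
        {x : Fin P → ℝ | p ≤ (Finset.univ.filter (fun i => t < x i)).card}).toReal
      = ∑ i ∈ Finset.range p,
          ((p - 1).choose i : ℝ) * (-1) ^ i *
            ((P.factorial : ℝ) / (((P - p).factorial : ℝ) * ((p - 1).factorial : ℝ))) *
            (1 - invGammaCDF a m t ^ (P - p + i + 1)) / ((P - p + i + 1 : ℕ) : ℝ) := by
  have := invGamma_prob a ha m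
  obtain ⟨s, rfl⟩ : ∃ s, p = s + 1 := ⟨p - 1, by omega⟩
  rw [prob_tail, tail_identity P s hpP]
  rfl
end

section
/- Fix ξ₁, ξ₂ > 0 and a function τ : (0,∞) → (0,∞) with τ(ρ) ≤ min(1/(ρξ₁), 1/(ρξ₂)) for every ρ. For each ρ > 0 set τ̃ = 1/τ(ρ), t_i = ρξ_i, and φ_i = max(τ̃, t_i) for i = 1,2. Let X, Y be i.i.d. with law μ_{a,m} and let B be uniform on {1,2}, independent of (X,Y); write Mx = max(X,Y), Mn = min(X,Y). Define the strong user's one-bit-feedback outage event E₂(ρ) = ({Mn < τ̃ ≤ Mx} ∩ {Mn > t₂}) ∪ ({Mx < τ̃} ∩ {Mn > t_B}) ∪ ({Mn ≥ τ̃} ∩ {Mn > φ_B}). Then there exist constants 0 < c ≤ C and ρ₀ > 0 such that for all ρ ≥ ρ₀, c · ρ^{-2(m+1)} ≤ P(E₂(ρ)) ≤ C · ρ^{-2(m+1)}. Hence with one-bit feedback the strong user achieves diversity order 2(m+1), the same as with perfect user ordering. -/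
open MeasureTheory ProbabilityTheory

lemma lintegral_pow_tail (m : ℕ) (D K : ℝ) (hD : 0 ≤ D) (hK : 0 < K) :
    ∫⁻ x in Set.Ioi K, ENNReal.ofReal (D * x ^ (-((m : ℝ) + 2))) =
      ENNReal.ofReal (D / (m + 1) / K ^ (m + 1)) := by
  have hm : (0 : ℝ) ≤ m := Nat.cast_nonneg m
  have h1 : -((m : ℝ) + 2) < -1 := by linarith
  rw [← ofReal_integral_eq_lintegral_ofReal]
  · rw [integral_const_mul, integral_Ioi_rpow_of_lt h1 hK]
    congr 1
    have e : -((m : ℝ) + 2) + 1 = -((m + 1 : ℕ) : ℝ) := by push_cast; ring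
    rw [e, Real.rpow_neg hK.le, Real.rpow_natCast]
    push_cast
    have : (m : ℝ) + 1 ≠ 0 := by positivity
    field_simp
  · exact (integrableOn_Ioi_rpow_of_lt h1 hK).const_mul D
  · filter_upwards [ae_restrict_mem measurableSet_Ioi] with x hx
    have : 0 < x := hK.trans hx
    show 0 ≤ _
    positivity

lemma density_eq (a : ℝ) (m : ℕ) (x : ℝ) (hx : 0 < x) :
    invGammaDensity a m x =
      Real.exp (-(1 / (a * x))) * (1 / (m.factorial * a ^ (m + 1)) * x ^ (-((m : ℝ) + 2))) := by
  have : x ^ (-((m : ℝ) + 2)) = x ^ (-((m : ℤ) + 2)) := by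
    rw [← Real.rpow_intCast]; push_cast; rfl
  rw [this, invGammaDensity, if_pos hx]
  ring

lemma tail_upper (a : ℝ) (ha : 0 < a) (m : ℕ) (K : ℝ) (hK : 0 < K) :
    invGammaMeasure a m (Set.Ioi K) ≤
      ENNReal.ofReal (1 / (m.factorial * a ^ (m + 1)) / (m + 1) / K ^ (m + 1)) := by
  rw [← lintegral_pow_tail m _ K (by positivity) hK, invGammaMeasure,
    withDensity_apply _ measurableSet_Ioi]
  refine setLIntegral_mono' measurableSet_Ioi fun x hx => ENNReal.ofReal_le_ofReal ?_
  have hx0 : 0 < x := hK.trans hx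
  rw [density_eq a m x hx0]
  refine mul_le_of_le_one_left (by positivity) ?_
  rw [Real.exp_le_one_iff]
  have : 0 < 1 / (a * x) := by positivity
  linarith

lemma tail_lower (a : ℝ) (ha : 0 < a) (m : ℕ) (K : ℝ) (hK : 0 < K) (haK : 1 ≤ a * K) :
    ENNReal.ofReal (Real.exp (-1) * (1 / (m.factorial * a ^ (m + 1))) / (m + 1) / K ^ (m + 1)) ≤
    invGammaMeasure a m (Set.Ioi K) := by
  rw [← lintegral_pow_tail m _ K (by positivity) hK, invGammaMeasure,
    withDensity_apply _ measurableSet_Ioi]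
  refine setLIntegral_mono' measurableSet_Ioi fun x hx => ENNReal.ofReal_le_ofReal ?_
  have hx0 : 0 < x := hK.trans hx
  rw [density_eq a m x hx0, mul_assoc]
  refine mul_le_mul_of_nonneg_right ?_ (by positivity)
  rw [Real.exp_le_exp]
  have h2 : 1 ≤ a * x := haK.trans (by have := le_of_lt (Set.mem_Ioi.1 hx); gcongr)
  have : 1 / (a * x) ≤ 1 := by
    rw [div_le_one (by positivity)]; exact h2
  linarith

lemma tail_diff (a : ℝ) (m : ℕ) (K s : ℝ) :
    invGammaMeasure a m (Set.Ioi K \ {s}) = invGammaMeasure a m (Set.Ioi K) := by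
  apply measure_sdiff_null
  exact withDensity_absolutelyContinuous _ _ (by simp)

/-- Lemma 1: with one-bit feedback the strong user achieves diversity order `2(m+1)`,
the same as with perfect user ordering. Here `X, Y` are i.i.d. with law `μ_{a,m}`,
`B` is uniform on `{1,2}` independent of `(X,Y)`, `Mx = max(X,Y)`, `Mn = min(X,Y)`,
and for each `ρ > 0` we set `τ̃ = 1/τ(ρ)`, `t_i = ρ ξ_i`, `φ_i = max(τ̃, t_i)`; the
strong user's outage event is
`E₂(ρ) = ({Mn < τ̃ ≤ Mx} ∩ {Mn > t₂}) ∪ ({Mx < τ̃} ∩ {Mn > t_B}) ∪ ({Mn ≥ τ̃} ∩ {Mn > φ_B})`,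
and there are constants `0 < c ≤ C` with `c ρ^{-2(m+1)} ≤ P(E₂(ρ)) ≤ C ρ^{-2(m+1)}`
for all sufficiently large `ρ`. -/
theorem one_bit_feedback_strong_user_diversity_order
    (a : ℝ) (ha : 0 < a) (m : ℕ)
    (ξ₁ ξ₂ : ℝ) (hξ₁ : 0 < ξ₁) (hξ₂ : 0 < ξ₂)
    (τ : ℝ → ℝ) (hτpos : ∀ ρ : ℝ, 0 < ρ → 0 < τ ρ)
    (hτ : ∀ ρ : ℝ, 0 < ρ → τ ρ ≤ min (1 / (ρ * ξ₁)) (1 / (ρ * ξ₂)))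
    {Ω : Type*} [MeasureSpace Ω] [IsProbabilityMeasure (ℙ : Measure Ω)]
    (X Y : Ω → ℝ) (B : Ω → ℕ)
    (hX : Measurable X) (hY : Measurable Y) (hB : Measurable B)
    (hXlaw : Measure.map X ℙ = invGammaMeasure a m)
    (hYlaw : Measure.map Y ℙ = invGammaMeasure a m)
    (hXY : IndepFun X Y ℙ)
    (hXYB : IndepFun (fun ω => (X ω, Y ω)) B ℙ)
    (hB1 : ℙ {ω | B ω = 1} = 1/2) (hB2 : ℙ {ω | B ω = 2} = 1/2) :
    ∃ c C ρ₀ : ℝ, 0 < c ∧ c ≤ C ∧ 0 < ρ₀ ∧ ∀ ρ : ℝ, ρ₀ ≤ ρ →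
      c / ρ ^ (2 * (m + 1)) ≤
        (ℙ {ω |
          (min (X ω) (Y ω) < (τ ρ)⁻¹ ∧ (τ ρ)⁻¹ ≤ max (X ω) (Y ω) ∧
            ρ * ξ₂ < min (X ω) (Y ω)) ∨
          (max (X ω) (Y ω) < (τ ρ)⁻¹ ∧
            (if B ω = 1 then ρ * ξ₁ else ρ * ξ₂) < min (X ω) (Y ω)) ∨
          ((τ ρ)⁻¹ ≤ min (X ω) (Y ω) ∧
            (if B ω = 1 then max (τ ρ)⁻¹ (ρ * ξ₁) else max (τ ρ)⁻¹ (ρ * ξ₂))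
              < min (X ω) (Y ω))}).toReal ∧
      (ℙ {ω |
          (min (X ω) (Y ω) < (τ ρ)⁻¹ ∧ (τ ρ)⁻¹ ≤ max (X ω) (Y ω) ∧
            ρ * ξ₂ < min (X ω) (Y ω)) ∨
          (max (X ω) (Y ω) < (τ ρ)⁻¹ ∧
            (if B ω = 1 then ρ * ξ₁ else ρ * ξ₂) < min (X ω) (Y ω)) ∨
          ((τ ρ)⁻¹ ≤ min (X ω) (Y ω) ∧
            (if B ω = 1 then max (τ ρ)⁻¹ (ρ * ξ₁) else max (τ ρ)⁻¹ (ρ * ξ₂))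
              < min (X ω) (Y ω))}).toReal ≤
        C / ρ ^ (2 * (m + 1)) := by
  set D : ℝ := 1 / (m.factorial * a ^ (m + 1)) / (m + 1) with hD
  have hDpos : 0 < D := by positivity
  set L := min ξ₁ ξ₂ with hL
  set U := max ξ₁ ξ₂ with hU
  have hLpos : 0 < L := lt_min hξ₁ hξ₂
  have hUpos : 0 < U := lt_max_of_lt_left hξ₁
  have hLU : L ≤ U := min_le_max
  have hprob : ∀ A : Set ℝ, MeasurableSet A →
      ℙ (X ⁻¹' A ∩ Y ⁻¹' A) = invGammaMeasure a m A ^ 2 := by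
    intro A hA
    rw [hXY.measure_inter_preimage_eq_mul A A hA hA, ← Measure.map_apply hX hA,
      ← Measure.map_apply hY hA, hXlaw, hYlaw, sq]
  refine ⟨(Real.exp (-1) * D / U ^ (m + 1)) ^ 2, (D / L ^ (m + 1)) ^ 2, 1 / (a * U),
    by positivity, ?_, by positivity, ?_⟩
  · have h1 : Real.exp (-1) ≤ 1 := by rw [Real.exp_le_one_iff]; norm_num
    have h2 : Real.exp (-1) * D ≤ D := mul_le_of_le_one_left hDpos.le h1
    gcongr
  intro ρ hρ
  have hρ0 : 0 < ρ := lt_of_lt_of_le (by positivity) hρ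
  have ht := hτpos ρ hρ0
  have ht1 : ρ * ξ₁ ≤ (τ ρ)⁻¹ := by
    rw [le_inv_comm₀ (by positivity) ht, ← one_div]
    exact (hτ ρ hρ0).trans (min_le_left _ _)
  have ht2 : ρ * ξ₂ ≤ (τ ρ)⁻¹ := by
    rw [le_inv_comm₀ (by positivity) ht, ← one_div]
    exact (hτ ρ hρ0).trans (min_le_right _ _)
  rw [max_eq_left ht1, max_eq_left ht2]
  simp only [ite_self]
  generalize (τ ρ)⁻¹ = s at *
  have hL1 : ρ * L ≤ ρ * ξ₁ := by gcongr; exact min_le_left _ _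
  have hL2 : ρ * L ≤ ρ * ξ₂ := by gcongr; exact min_le_right _ _
  have hU1 : ρ * ξ₁ ≤ ρ * U := by gcongr; exact le_max_left _ _
  have hU2 : ρ * ξ₂ ≤ ρ * U := by gcongr; exact le_max_right _ _
  constructor
  · have key := hprob (Set.Ioi (ρ * U) \ {s}) (measurableSet_Ioi.diff (measurableSet_singleton s))
    rw [tail_diff] at key
    have hb := tail_lower a ha m (ρ * U) (by positivity) (by
      rw [div_le_iff₀ (by positivity)] at hρ; linarith)
    have h2 := pow_le_pow_left₀ zero_le hb 2
    rw [← key, ← ENNReal.ofReal_pow (by positivity)] at h2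
    rw [← ENNReal.ofReal_le_iff_le_toReal (measure_ne_top _ _)]
    refine le_trans (le_of_eq ?_) (h2.trans (measure_mono ?_))
    · congr 1
      rw [hD, pow_mul', mul_pow]
      field_simp
    · rintro ω ⟨⟨hx, hxs⟩, ⟨hy, hys⟩⟩
      simp only [Set.mem_Ioi, Set.mem_singleton_iff, Set.mem_ofPred_eq] at *
      have hmin : ρ * U < min (X ω) (Y ω) := lt_min hx hy
      have hne : min (X ω) (Y ω) ≠ s := by
        rcases min_choice (X ω) (Y ω) with h | h <;> rw [h] <;> assumption
      rcases lt_or_gt_of_ne hne with h | h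
      · rcases lt_or_ge (max (X ω) (Y ω)) s with h' | h'
        · right; left
          refine ⟨h', ?_⟩
          split_ifs <;> linarith
        · left
          exact ⟨h, h', by linarith⟩
      · right; right
        exact ⟨h.le, h⟩
  · have key := hprob (Set.Ioi (ρ * L)) measurableSet_Ioi
    have hb := tail_upper a ha m (ρ * L) (by positivity)
    have h2 := pow_le_pow_left₀ zero_le hb 2
    rw [← key, ← ENNReal.ofReal_pow (by positivity)] at h2
    refine ENNReal.toReal_le_of_le_ofReal (by positivity) ?_
    refine (measure_mono ?_).trans (h2.trans (le_of_eq ?_))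
    · intro ω hω
      simp only [Set.mem_ofPred_eq] at hω
      have : ρ * L < min (X ω) (Y ω) := by
        rcases hω with ⟨_, _, h⟩ | ⟨_, h⟩ | ⟨_, h⟩
        · linarith
        · split_ifs at h <;> linarith
        · linarith
      exact lt_min_iff.1 this
    · congr 1
      rw [hD, pow_mul', mul_pow]
      field_simp
end

section
/- Let X, Y be i.i.d. real random variables whose common CDF F is continuous, and let B be uniform on {1,2}, independent of (X,Y); write Mx = max(X,Y), Mn = min(X,Y). Let τ̃ > 0 and t₁, t₂ ≥ 0, and set φ_i = max(τ̃, t_i). Define the weak user's one-bit-feedback outage event E₁ = ({Mn < τ̃ ≤ Mx} ∩ {Mx > t₁}) ∪ ({Mn ≥ τ̃} ∩ {Mx > φ_B}) ∪ ({Mx < τ̃} ∩ {Mx > t_B}). Then P(E₁) = 2(1 - F(φ₁))F(τ̃) + (1/2)∑_{i=1}^{2}(1 - F(φ_i)²) - ∑_{i=1}^{2} F(τ̃)(1 - F(φ_i)) + (1/2)∑_{i=1}^{2} [F(τ̃)² - F(t_i)²]⁺, where [x]⁺ = max(0,x). -/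
open MeasureTheory ProbabilityTheory

lemma aux_prod (ν : Measure ℝ) [IsProbabilityMeasure ν] (F : ℝ → ℝ)
    (hF : ∀ x, F x = ν.real (Set.Iic x)) (hFc : Continuous F) (τ a t : ℝ) :
    (ν.prod ν).real {p : ℝ × ℝ |
      (min p.1 p.2 < τ ∧ τ ≤ max p.1 p.2 ∧ a < max p.1 p.2) ∨
      (τ ≤ min p.1 p.2 ∧ max τ t < max p.1 p.2) ∨
      (max p.1 p.2 < τ ∧ t < max p.1 p.2)} =
    2 * (1 - F (max τ a)) * F τ + ((1 - F (max τ t) ^ 2) - 2 * (F τ * (1 - F (max τ t))))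
      + max 0 (F τ ^ 2 - F t ^ 2) := by
  have hmono : Monotone F := by
    intro x y h
    rw [hF, hF]
    exact measureReal_mono (Set.Iic_subset_Iic.2 h)
  have hnn : ∀ x, 0 ≤ F x := fun x => by rw [hF]; exact measureReal_nonneg
  have hat : ∀ x, ν {x} = 0 := by
    intro x
    have h1 : (cdf ν : ℝ → ℝ) = F := by
      funext y; rw [hF, cdf_eq_real]
    have h2 := (cdf ν).measure_singleton x
    rw [measure_cdf, h1, (hFc.continuousAt.continuousWithinAt).leftLim_eq] at h2
    simpa using h2
  have : NullSingletonClass ν := ⟨hat⟩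
  have hIio : ∀ x, ν.real (Set.Iio x) = F x := fun x => by
    rw [hF]; exact measureReal_congr Iio_ae_eq_Iic
  have hIoi : ∀ x, ν.real (Set.Ioi x) = 1 - F x := fun x => by
    rw [hF, ← Set.compl_Iic, probReal_compl_eq_one_sub measurableSet_Iic]
  have hIci : ∀ x, ν.real (Set.Ici x) = 1 - F x := fun x => by
    rw [← hIio, ← Set.compl_Iio, probReal_compl_eq_one_sub measurableSet_Iio]
  have hIcc : ∀ x y, x ≤ y → ν.real (Set.Icc x y) = F y - F x := fun x y h => by
    have : Set.Icc x y = Set.Iic y \ Set.Iio x := by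
      ext z; simp [and_comm]
    rw [this, measureReal_sdiff (Set.Iio_subset_Iic_self.trans (Set.Iic_subset_Iic.2 h)) measurableSet_Iio, hIio, hF y]
  have hA : ν.real (Set.Ici τ ∩ Set.Ioi a) = 1 - F (max τ a) := by
    apply le_antisymm
    · rw [← hIci]
      exact measureReal_mono (fun z hz => Set.mem_Ici.2 (max_le hz.1 (le_of_lt hz.2)))
    · rw [← hIoi]
      exact measureReal_mono (fun z hz =>
        ⟨Set.mem_Ici.2 (le_of_lt (lt_of_le_of_lt (le_max_left _ _) hz)),
          Set.mem_Ioi.2 (lt_of_le_of_lt (le_max_right _ _) hz)⟩)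
  have mA : MeasurableSet (Set.Ici τ ∩ Set.Ioi a) := measurableSet_Ici.inter measurableSet_Ioi
  set φ := max τ t with hφ
  have hτφ : τ ≤ φ := le_max_left _ _
  have hset : {p : ℝ × ℝ |
      (min p.1 p.2 < τ ∧ τ ≤ max p.1 p.2 ∧ a < max p.1 p.2) ∨
      (τ ≤ min p.1 p.2 ∧ φ < max p.1 p.2) ∨
      (max p.1 p.2 < τ ∧ t < max p.1 p.2)} =
      (((Set.Iio τ ×ˢ (Set.Ici τ ∩ Set.Ioi a)) ∪ ((Set.Ici τ ∩ Set.Ioi a) ×ˢ Set.Iio τ)) ∪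
        ((Set.Ici τ ×ˢ Set.Ici τ) \ (Set.Icc τ φ ×ˢ Set.Icc τ φ))) ∪
        ((Set.Iio τ ×ˢ Set.Iio τ) \ (Set.Iic t ×ˢ Set.Iic t)) := by
    ext ⟨x, y⟩
    clear_value φ
    simp only [Set.mem_ofPred_eq, Set.mem_union, Set.mem_prod, Set.mem_sdiff, Set.mem_Iio,
      Set.mem_Ici, Set.mem_inter_iff, Set.mem_Ioi, Set.mem_Icc, Set.mem_Iic]
    rcases le_total x y with h | h
    · simp only [min_eq_left h, max_eq_right h]
      grind
    · simp only [min_eq_right h, max_eq_left h]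
      grind
  have m3 : MeasurableSet ((Set.Ici τ ×ˢ Set.Ici τ) \ (Set.Icc τ φ ×ˢ Set.Icc τ φ) : Set (ℝ × ℝ)) :=
    (measurableSet_Ici.prod measurableSet_Ici).diff (measurableSet_Icc.prod measurableSet_Icc)
  have m4 : MeasurableSet ((Set.Iio τ ×ˢ Set.Iio τ) \ (Set.Iic t ×ˢ Set.Iic t) : Set (ℝ × ℝ)) :=
    (measurableSet_Iio.prod measurableSet_Iio).diff (measurableSet_Iic.prod measurableSet_Iic)
  have h3 : (ν.prod ν).real ((Set.Ici τ ×ˢ Set.Ici τ) \ (Set.Icc τ φ ×ˢ Set.Icc τ φ)) =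
      (1 - F τ) * (1 - F τ) - (F φ - F τ) * (F φ - F τ) := by
    rw [measureReal_sdiff (Set.prod_mono Set.Icc_subset_Ici_self Set.Icc_subset_Ici_self)
      (measurableSet_Icc.prod measurableSet_Icc), measureReal_prod_prod, measureReal_prod_prod,
      hIci, hIcc _ _ hτφ]
  have h4 : (ν.prod ν).real ((Set.Iio τ ×ˢ Set.Iio τ) \ (Set.Iic t ×ˢ Set.Iic t)) =
      max 0 (F τ ^ 2 - F t ^ 2) := by
    rcases lt_or_ge t τ with h | h
    · rw [measureReal_sdiff (Set.prod_mono (Set.Iic_subset_Iio.2 h)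
        (Set.Iic_subset_Iio.2 h))
        (measurableSet_Iic.prod measurableSet_Iic), measureReal_prod_prod, measureReal_prod_prod,
        hIio, ← hF, max_eq_right]
      · ring
      · nlinarith [hmono h.le, hnn t, hnn τ]
    · rw [Set.sdiff_eq_empty.2 (Set.prod_mono (Set.Iio_subset_Iic_self.trans (Set.Iic_subset_Iic.2 h))
        (Set.Iio_subset_Iic_self.trans (Set.Iic_subset_Iic.2 h))), measureReal_empty, max_eq_left]
      nlinarith [hmono h, hnn t, hnn τ]
  rw [hset, measureReal_union _ m4, measureReal_union _ m3,
    measureReal_union _ (mA.prod measurableSet_Iio), measureReal_prod_prod, measureReal_prod_prod,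
    h3, h4, hA, hIio]
  · ring
  all_goals
    rw [Set.disjoint_left]
    rintro ⟨x, y⟩
    clear_value φ
    simp only [Set.mem_union, Set.mem_prod, Set.mem_sdiff, Set.mem_Iio,
      Set.mem_Ici, Set.mem_inter_iff, Set.mem_Ioi, Set.mem_Icc, Set.mem_Iic]
    grind

lemma aux_meas (τ a t : ℝ) : MeasurableSet {p : ℝ × ℝ |
      (min p.1 p.2 < τ ∧ τ ≤ max p.1 p.2 ∧ a < max p.1 p.2) ∨
      (τ ≤ min p.1 p.2 ∧ max τ t < max p.1 p.2) ∨
      (max p.1 p.2 < τ ∧ t < max p.1 p.2)} := by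
  have hm : Measurable (fun p : ℝ × ℝ => min p.1 p.2) := measurable_fst.min measurable_snd
  have hM : Measurable (fun p : ℝ × ℝ => max p.1 p.2) := measurable_fst.max measurable_snd
  exact ((measurableSet_lt hm measurable_const).inter
    ((measurableSet_le measurable_const hM).inter (measurableSet_lt measurable_const hM))).union
    (((measurableSet_le measurable_const hm).inter (measurableSet_lt measurable_const hM)).union
    ((measurableSet_lt hM measurable_const).inter (measurableSet_lt measurable_const hM)))

/-- One-bit-feedback outage probability of the weak user (P = 2 case): for i.i.d. `X, Y`
with common continuous CDF `F`, `B` uniform on `{1,2}` independent of `(X,Y)`,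
`Mx = max(X,Y)`, `Mn = min(X,Y)`, threshold `τ̃ > 0`, outage levels `t₁, t₂ ≥ 0` and
`φ_i = max(τ̃, t_i)`, the probability of the weak user's outage event
`E₁ = ({Mn < τ̃ ≤ Mx} ∩ {Mx > t₁}) ∪ ({Mn ≥ τ̃} ∩ {Mx > φ_B}) ∪ ({Mx < τ̃} ∩ {Mx > t_B})`
equals
`2(1-F(φ₁))F(τ̃) + (1/2)∑ᵢ(1-F(φᵢ)²) - ∑ᵢ F(τ̃)(1-F(φᵢ)) + (1/2)∑ᵢ[F(τ̃)²-F(tᵢ)²]⁺`. -/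
theorem one_bit_feedback_weak_user_outage
    {Ω : Type*} [MeasureSpace Ω] [IsProbabilityMeasure (ℙ : Measure Ω)]
    (X Y : Ω → ℝ) (B : Ω → ℕ)
    (hX : Measurable X) (hY : Measurable Y) (hB : Measurable B)
    (hXY : IndepFun X Y ℙ)
    (hid : Measure.map X ℙ = Measure.map Y ℙ)
    (hXYB : IndepFun (fun ω => (X ω, Y ω)) B ℙ)
    (hB1 : ℙ {ω | B ω = 1} = 1/2) (hB2 : ℙ {ω | B ω = 2} = 1/2)
    (F : ℝ → ℝ) (hF : ∀ x, F x = (ℙ {ω | X ω ≤ x}).toReal)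
    (hFcont : Continuous F)
    (τ' : ℝ) (hτ' : 0 < τ') (t₁ t₂ : ℝ) (ht₁ : 0 ≤ t₁) (ht₂ : 0 ≤ t₂) :
    (ℙ {ω |
        (min (X ω) (Y ω) < τ' ∧ τ' ≤ max (X ω) (Y ω) ∧ t₁ < max (X ω) (Y ω)) ∨
        (τ' ≤ min (X ω) (Y ω) ∧
          (if B ω = 1 then max τ' t₁ else max τ' t₂) < max (X ω) (Y ω)) ∨
        (max (X ω) (Y ω) < τ' ∧
          (if B ω = 1 then t₁ else t₂) < max (X ω) (Y ω))}).toReal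
      = 2 * (1 - F (max τ' t₁)) * F τ'
        + (1/2) * ((1 - F (max τ' t₁) ^ 2) + (1 - F (max τ' t₂) ^ 2))
        - (F τ' * (1 - F (max τ' t₁)) + F τ' * (1 - F (max τ' t₂)))
        + (1/2) * (max 0 (F τ' ^ 2 - F t₁ ^ 2) + max 0 (F τ' ^ 2 - F t₂ ^ 2)) := by
  have hXm : AEMeasurable X (ℙ : Measure Ω) := hX.aemeasurable
  haveI : IsProbabilityMeasure (Measure.map X (ℙ : Measure Ω)) :=
    Measure.isProbabilityMeasure_map hXm
  have hF' : ∀ x, F x = (Measure.map X (ℙ : Measure Ω)).real (Set.Iic x) := by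
    intro x
    rw [hF, map_measureReal_apply hX measurableSet_Iic]
    rfl
  have hlaw : Measure.map (fun ω => (X ω, Y ω)) (ℙ : Measure Ω) =
      (Measure.map X ℙ).prod (Measure.map X ℙ) := by
    rw [(indepFun_iff_map_prod_eq_prod_map_map hXm hY.aemeasurable).1 hXY, ← hid]
  have key := fun t => aux_prod (Measure.map X (ℙ : Measure Ω)) F hF' hFcont τ' t₁ t
  rw [← hlaw] at key
  have hP : Measurable (fun ω => (X ω, Y ω)) := hX.prodMk hY
  have h1 : (ℙ : Measure Ω).real (B ⁻¹' {1}) = 1/2 := by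
    have : B ⁻¹' {1} = {ω | B ω = 1} := rfl
    rw [this, Measure.real, hB1]; simp
  have h2 : (ℙ : Measure Ω).real (B ⁻¹' {1}ᶜ) = 1/2 := by
    rw [Set.preimage_compl, probReal_compl_eq_one_sub (hB (measurableSet_singleton 1)), h1]
    norm_num
  have ind : ∀ (S : Set (ℝ × ℝ)) (T : Set ℕ), MeasurableSet S →
      (ℙ : Measure Ω).real ((fun ω => (X ω, Y ω)) ⁻¹' S ∩ B ⁻¹' T) =
      (Measure.map (fun ω => (X ω, Y ω)) (ℙ : Measure Ω)).real S * (ℙ : Measure Ω).real (B ⁻¹' T) := by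
    intro S T hS
    rw [map_measureReal_apply hP hS, Measure.real, Measure.real, Measure.real,
      hXYB.measure_inter_preimage_eq_mul S T hS (MeasurableSet.of_discrete), ENNReal.toReal_mul]
  have e1 := ind _ {1} (aux_meas τ' t₁ t₁)
  have e2 := ind _ {1}ᶜ (aux_meas τ' t₁ t₂)
  rw [key, h1] at e1
  rw [key, h2] at e2
  change (ℙ : Measure Ω).real _ = _
  rw [← measureReal_inter_add_diff (s := {ω | _}) (hB (measurableSet_singleton 1))]
  refine Eq.trans (congrArg₂ (· + ·) (Eq.trans (congrArg _ ?_) e1) (Eq.trans (congrArg _ ?_) e2)) ?_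
  · ext ω
    by_cases h : B ω = 1 <;> simp [h]
  · ext ω
    by_cases h : B ω = 1 <;> simp [h]
  · ring
end

section
/- Let X, Y be i.i.d. real random variables whose common CDF F is continuous, and let B be uniform on {1,2}, independent of (X,Y); write Mx = max(X,Y), Mn = min(X,Y). Let τ̃ > 0 and t₁, t₂ ≥ 0, and set φ_i = max(τ̃, t_i). Define the strong user's one-bit-feedback outage event E₂ = ({Mn < τ̃ ≤ Mx} ∩ {Mn > t₂}) ∪ ({Mx < τ̃} ∩ {Mn > t_B}) ∪ ({Mn ≥ τ̃} ∩ {Mn > φ_B}). Then P(E₂) = 2[F(τ̃) - F(t₂)]⁺(1 - F(τ̃)) + ∑_{i=1}^{2} F(τ̃)[F(τ̃) - F(t_i)]⁺ - (1/2)∑_{i=1}^{2}[F(τ̃)² - F(t_i)²]⁺ + (1/2)∑_{i=1}^{2}(1 - F(φ_i))², where [x]⁺ = max(0,x). -/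
open MeasureTheory ProbabilityTheory

theorem aux_vals (ν : Measure ℝ) [IsProbabilityMeasure ν] (F : ℝ → ℝ)
    (hF : ∀ x, F x = ν.real (Set.Iic x)) (hFcont : Continuous F) :
    (∀ a b, ν.real (Set.Ioo a b) = max 0 (F b - F a)) ∧
    (∀ a, ν.real (Set.Ici a) = 1 - F a) ∧ (∀ a, ν.real (Set.Ioi a) = 1 - F a) := by
  have hc : ∀ x, cdf ν x = F x := fun x => by rw [cdf_eq_real, hF]
  have hc' : (cdf ν : ℝ → ℝ) = F := funext hc
  have hl : ∀ x, Function.leftLim (cdf ν) x = F x := fun x => by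
    rw [hc']
    exact hFcont.continuousAt.continuousWithinAt.leftLim_eq
  have h1 : ∀ x, 0 ≤ 1 - F x := fun x => by
    have := cdf_le_one ν x
    rw [hc] at this; linarith
  refine ⟨fun a b => ?_, fun a => ?_, fun a => ?_⟩
  · rw [← measure_cdf ν, measureReal_def, StieltjesFunction.measure_Ioo, hl, hc,
      ENNReal.toReal_ofReal', max_comm]
  · rw [← measure_cdf ν, measureReal_def, StieltjesFunction.measure_Ici _ (tendsto_cdf_atTop ν), hl,
      ENNReal.toReal_ofReal (h1 a)]
  · rw [← measure_cdf ν, measureReal_def, StieltjesFunction.measure_Ioi _ (tendsto_cdf_atTop ν), hc,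
      ENNReal.toReal_ofReal (h1 a)]

/-- The region in the plane. -/
def auxS (τ t s : ℝ) : Set (ℝ × ℝ) :=
  ((Set.Ioo s τ ×ˢ Set.Ici τ ∪ Set.Ici τ ×ˢ Set.Ioo s τ) ∪ Set.Ioo t τ ×ˢ Set.Ioo t τ) ∪
    Set.Ioi (max τ t) ×ˢ Set.Ioi (max τ t)

theorem aux_meas_s4 (τ t s : ℝ) : MeasurableSet (auxS τ t s) := by
  unfold auxS
  measurability

theorem aux_mem (τ t s x y : ℝ) : (x, y) ∈ auxS τ t s ↔
    (min x y < τ ∧ τ ≤ max x y ∧ s < min x y) ∨ (max x y < τ ∧ t < min x y) ∨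
      (τ ≤ min x y ∧ max τ t < min x y) := by
  simp only [auxS, Set.mem_union, Set.mem_prod, Set.mem_Ioo, Set.mem_Ici, Set.mem_Ioi]
  grind

theorem aux_prob (ν : Measure ℝ) [IsProbabilityMeasure ν] (F : ℝ → ℝ)
    (hF : ∀ x, F x = ν.real (Set.Iic x)) (hFcont : Continuous F) (τ t s : ℝ) :
    (ν.prod ν).real (auxS τ t s) = 2 * max 0 (F τ - F s) * (1 - F τ)
      + (2 * F τ * max 0 (F τ - F t) - max 0 (F τ ^ 2 - F t ^ 2)) + (1 - F (max τ t)) ^ 2 := by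
  obtain ⟨h1, h2, h3⟩ := aux_vals ν F hF hFcont
  have hn : ∀ x, 0 ≤ F x := fun x => by rw [hF]; exact measureReal_nonneg
  have key : max 0 (F τ - F t) ^ 2 = 2 * F τ * max 0 (F τ - F t) - max 0 (F τ ^ 2 - F t ^ 2) := by
    have := hn τ
    have := hn t
    rcases le_total (F t) (F τ) with h | h
    · rw [max_eq_right (by linarith), max_eq_right (by nlinarith)]; ring
    · rw [max_eq_left (by linarith), max_eq_left (by nlinarith)]; ring
  unfold auxS
  rw [measureReal_union, measureReal_union, measureReal_union]
  · simp only [measureReal_prod_prod, h1, h2, h3]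
    rw [← key]; ring
  all_goals first
    | measurability
    | (rw [Set.disjoint_left]
       rintro ⟨x, y⟩
       simp only [Set.mem_union, Set.mem_prod, Set.mem_Ioo, Set.mem_Ici, Set.mem_Ioi]
       grind)

/-- One-bit-feedback outage probability of the strong user (P = 2 case): for i.i.d. `X, Y`
with common continuous CDF `F`, `B` uniform on `{1,2}` independent of `(X,Y)`,
`Mx = max(X,Y)`, `Mn = min(X,Y)`, threshold `τ̃ > 0`, outage levels `t₁, t₂ ≥ 0` and
`φ_i = max(τ̃, t_i)`, the probability of the strong user's outage event
`E₂ = ({Mn < τ̃ ≤ Mx} ∩ {Mn > t₂}) ∪ ({Mx < τ̃} ∩ {Mn > t_B}) ∪ ({Mn ≥ τ̃} ∩ {Mn > φ_B})`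
equals
`2[F(τ̃)-F(t₂)]⁺(1-F(τ̃)) + ∑ᵢ F(τ̃)[F(τ̃)-F(tᵢ)]⁺ - (1/2)∑ᵢ[F(τ̃)²-F(tᵢ)²]⁺
  + (1/2)∑ᵢ(1-F(φᵢ))²`. -/
theorem one_bit_feedback_strong_user_outage
    {Ω : Type*} [MeasureSpace Ω] [IsProbabilityMeasure (ℙ : Measure Ω)]
    (X Y : Ω → ℝ) (B : Ω → ℕ)
    (hX : Measurable X) (hY : Measurable Y) (hB : Measurable B)
    (hXY : IndepFun X Y ℙ)
    (hid : Measure.map X ℙ = Measure.map Y ℙ)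
    (hXYB : IndepFun (fun ω => (X ω, Y ω)) B ℙ)
    (hB1 : ℙ {ω | B ω = 1} = 1/2) (hB2 : ℙ {ω | B ω = 2} = 1/2)
    (F : ℝ → ℝ) (hF : ∀ x, F x = (ℙ {ω | X ω ≤ x}).toReal)
    (hFcont : Continuous F)
    (τ' : ℝ) (hτ' : 0 < τ') (t₁ t₂ : ℝ) (ht₁ : 0 ≤ t₁) (ht₂ : 0 ≤ t₂) :
    (ℙ {ω |
        (min (X ω) (Y ω) < τ' ∧ τ' ≤ max (X ω) (Y ω) ∧ t₂ < min (X ω) (Y ω)) ∨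
        (max (X ω) (Y ω) < τ' ∧
          (if B ω = 1 then t₁ else t₂) < min (X ω) (Y ω)) ∨
        (τ' ≤ min (X ω) (Y ω) ∧
          (if B ω = 1 then max τ' t₁ else max τ' t₂) < min (X ω) (Y ω))}).toReal
      = 2 * max 0 (F τ' - F t₂) * (1 - F τ')
        + (F τ' * max 0 (F τ' - F t₁) + F τ' * max 0 (F τ' - F t₂))
        - (1/2) * (max 0 (F τ' ^ 2 - F t₁ ^ 2) + max 0 (F τ' ^ 2 - F t₂ ^ 2))
        + (1/2) * ((1 - F (max τ' t₁)) ^ 2 + (1 - F (max τ' t₂)) ^ 2) := by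
  have hpX : IsProbabilityMeasure (Measure.map X ℙ) := Measure.isProbabilityMeasure_map hX.aemeasurable
  have hF' : ∀ x, F x = (Measure.map X ℙ).real (Set.Iic x) := fun x => by
    rw [hF, measureReal_def, Measure.map_apply hX measurableSet_Iic]; rfl
  have hjoint : Measure.map (fun ω => (X ω, Y ω)) ℙ
      = (Measure.map X ℙ).prod (Measure.map X ℙ) := by
    rw [(indepFun_iff_map_prod_eq_prod_map_map hX.aemeasurable hY.aemeasurable).1 hXY, ← hid]
  have hP : ∀ t, (ℙ : Measure Ω).real ((fun ω => (X ω, Y ω)) ⁻¹' auxS τ' t t₂) =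
      2 * max 0 (F τ' - F t₂) * (1 - F τ')
      + (2 * F τ' * max 0 (F τ' - F t) - max 0 (F τ' ^ 2 - F t ^ 2)) + (1 - F (max τ' t)) ^ 2 := by
    intro t
    rw [← aux_prob _ F hF' hFcont, ← hjoint, measureReal_def, measureReal_def,
      Measure.map_apply (hX.prodMk hY) (aux_meas_s4 _ _ _)]
  have hm1 : MeasurableSet {ω | B ω = 1} := hB (measurableSet_singleton 1)
  have hb1 : (ℙ : Measure Ω).real (B ⁻¹' {1}) = 1/2 := by
    change (ℙ {ω | B ω = 1}).toReal = _
    rw [hB1]; simp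
  have hb2 : (ℙ : Measure Ω).real (B ⁻¹' {1}ᶜ) = 1/2 := by
    rw [Set.preimage_compl, probReal_compl_eq_one_sub (hB (measurableSet_singleton 1)), hb1]
    norm_num
  have hI : ∀ t (T : Set ℕ), (ℙ : Measure Ω).real ((fun ω => (X ω, Y ω)) ⁻¹' auxS τ' t t₂ ∩ B ⁻¹' T)
      = (ℙ : Measure Ω).real ((fun ω => (X ω, Y ω)) ⁻¹' auxS τ' t t₂) * (ℙ : Measure Ω).real (B ⁻¹' T) := by
    intro t T
    simp only [measureReal_def]
    rw [hXYB.measure_inter_preimage_eq_mul _ _ (aux_meas_s4 _ _ _) (MeasurableSet.of_discrete),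
      ENNReal.toReal_mul]
  have hset : {ω |
        (min (X ω) (Y ω) < τ' ∧ τ' ≤ max (X ω) (Y ω) ∧ t₂ < min (X ω) (Y ω)) ∨
        (max (X ω) (Y ω) < τ' ∧
          (if B ω = 1 then t₁ else t₂) < min (X ω) (Y ω)) ∨
        (τ' ≤ min (X ω) (Y ω) ∧
          (if B ω = 1 then max τ' t₁ else max τ' t₂) < min (X ω) (Y ω))} =
      ((fun ω => (X ω, Y ω)) ⁻¹' auxS τ' t₁ t₂ ∩ B ⁻¹' {1}) ∪
      ((fun ω => (X ω, Y ω)) ⁻¹' auxS τ' t₂ t₂ ∩ B ⁻¹' {1}ᶜ) := by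
    ext ω
    simp only [Set.mem_setOf_eq, Set.mem_union, Set.mem_inter_iff, Set.mem_preimage, aux_mem,
      Set.mem_compl_iff, Set.mem_singleton_iff]
    by_cases h : B ω = 1 <;> simp [h]
  rw [hset, ← measureReal_def, measureReal_union, hI, hI, hb1, hb2, hP, hP]
  · ring
  · rw [Set.disjoint_left]
    rintro ω ⟨_, h⟩ ⟨_, h'⟩
    exact h' h
  · exact ((hX.prodMk hY) (aux_meas_s4 _ _ _)).inter (hB MeasurableSet.of_discrete)
end

section
/- For every real a > 0 and natural number m, lim_{t → ∞} t^{m+1} · μ_{a,m}((t, ∞)) = 1 / ( (m+1)! · a^{m+1} ). That is, the upper tail of the inverse-gamma law satisfies 1 - F_{a,m}(t) ~ ( (m+1)! (a t)^{m+1} )^{-1} as t → ∞. -/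
open Filter MeasureTheory

lemma aux_lint (m : ℕ) (c t : ℝ) (hc : 0 ≤ c) (ht : 0 < t) :
    ∫⁻ x in Set.Ioi t, ENNReal.ofReal (c * x ^ (-((m : ℤ) + 2)))
      = ENNReal.ofReal (c * ((t ^ (m + 1))⁻¹ / (m + 1))) := by
  have hlt : (-((m : ℝ) + 2)) < -1 := by
    have : (0 : ℝ) ≤ m := Nat.cast_nonneg m
    linarith
  have hz : ∀ x : ℝ, x ^ (-((m : ℤ) + 2)) = x ^ (-((m : ℝ) + 2)) := by
    intro x
    rw [← Real.rpow_intCast]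
    push_cast
    rfl
  have hint := integrableOn_Ioi_rpow_of_lt hlt ht
  have hval := integral_Ioi_rpow_of_lt hlt ht
  simp only [hz]
  rw [← ofReal_integral_eq_lintegral_ofReal (hint.const_mul c), integral_const_mul, hval]
  · congr 2
    have h1 : (-((m : ℝ) + 2) + 1) = -((m + 1 : ℕ) : ℝ) := by push_cast; ring
    rw [h1, Real.rpow_neg ht.le, Real.rpow_natCast, neg_div_neg_eq]
    push_cast
    rfl
  · filter_upwards [ae_restrict_mem measurableSet_Ioi] with x hx
    have : 0 < x := lt_trans ht hx
    simp only [Pi.zero_apply]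
    positivity

/-- Upper-tail asymptotics of the inverse-gamma law:
`1 - F_{a,m}(t) = μ_{a,m}((t,∞)) ~ ((m+1)! (a t)^{m+1})⁻¹` as `t → ∞`. -/
theorem inverse_gamma_tail (a : ℝ) (ha : 0 < a) (m : ℕ) :
    Tendsto (fun t : ℝ => t ^ (m + 1) * (invGammaMeasure a m (Set.Ioi t)).toReal)
      atTop (nhds (1 / (((m + 1).factorial : ℝ) * a ^ (m + 1)))) := by
  have hK : 0 < (m.factorial : ℝ) * a ^ (m + 1) := by positivity
  set K := (m.factorial : ℝ) * a ^ (m + 1) with hKdef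
  have hL : 1 / (((m + 1).factorial : ℝ) * a ^ (m + 1)) = 1 / K / (m + 1) := by
    rw [hKdef, Nat.factorial_succ]
    push_cast
    field_simp
  rw [hL]
  have hup : ∀ t : ℝ, 0 < t → invGammaMeasure a m (Set.Ioi t)
      ≤ ENNReal.ofReal (1 / K * ((t ^ (m + 1))⁻¹ / (m + 1))) := by
    intro t ht
    rw [← aux_lint m (1 / K) t (by positivity) ht, invGammaMeasure,
      withDensity_apply _ measurableSet_Ioi]
    refine setLIntegral_mono' measurableSet_Ioi fun x hx => ENNReal.ofReal_le_ofReal ?_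
    have hx0 : 0 < x := lt_trans ht hx
    rw [invGammaDensity, if_pos hx0, ← hKdef, div_eq_mul_one_div, mul_comm]
    have h1 : Real.exp (-(1 / (a * x))) ≤ 1 := by
      apply Real.exp_le_one_iff.2
      have : 0 ≤ 1 / (a * x) := by positivity
      linarith
    have h2 : 0 ≤ x ^ (-((m : ℤ) + 2)) := by positivity
    have h3 : 0 ≤ 1 / K := by positivity
    exact mul_le_mul_of_nonneg_left (mul_le_of_le_one_right h2 h1) h3
  have hlo : ∀ t : ℝ, 0 < t →
      ENNReal.ofReal (Real.exp (-(1 / (a * t))) * (1 / K) * ((t ^ (m + 1))⁻¹ / (m + 1)))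
      ≤ invGammaMeasure a m (Set.Ioi t) := by
    intro t ht
    rw [← aux_lint m _ t (by positivity) ht, invGammaMeasure,
      withDensity_apply _ measurableSet_Ioi]
    refine setLIntegral_mono' measurableSet_Ioi fun x hx => ENNReal.ofReal_le_ofReal ?_
    have hx0 : 0 < x := lt_trans ht hx
    have hxt : t ≤ x := le_of_lt hx
    rw [invGammaDensity, if_pos hx0, ← hKdef]
    have h1 : Real.exp (-(1 / (a * t))) ≤ Real.exp (-(1 / (a * x))) := by
      apply Real.exp_le_exp.2
      apply neg_le_neg
      gcongr
    have h2 : 0 ≤ x ^ (-((m : ℤ) + 2)) := by positivity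
    have h3 : 0 ≤ 1 / K := by positivity
    have h4 := mul_le_mul_of_nonneg_right h1 (mul_nonneg h3 h2)
    calc _ = _ := mul_assoc _ _ _
      _ ≤ _ := h4
      _ = _ := by ring
  have hlim : Tendsto (fun t : ℝ => Real.exp (-(1 / (a * t))) * (1 / K / (m + 1)))
      atTop (nhds (1 / K / (m + 1))) := by
    have h1 : Tendsto (fun t : ℝ => a * t) atTop atTop := tendsto_id.const_mul_atTop ha
    have h2 : Tendsto (fun t : ℝ => -(1 / (a * t))) atTop (nhds 0) := by
      have := (tendsto_inv_atTop_zero.comp h1).neg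
      simpa [Function.comp_def] using this
    have h3 := (Real.continuous_exp.tendsto 0).comp h2
    have h4 := h3.mul_const (1 / K / (m + 1))
    simpa [Function.comp_def] using h4
  refine tendsto_of_tendsto_of_tendsto_of_le_of_le' hlim tendsto_const_nhds ?_ ?_
  · filter_upwards [eventually_gt_atTop 0] with t ht
    have h := ENNReal.toReal_mono (ne_top_of_le_ne_top ENNReal.ofReal_ne_top (hup t ht)) (hlo t ht)
    rw [ENNReal.toReal_ofReal (by positivity)] at h
    have h5 := mul_le_mul_of_nonneg_left h (pow_pos ht (m + 1)).le
    refine le_trans (le_of_eq ?_) h5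
    field_simp
  · filter_upwards [eventually_gt_atTop 0] with t ht
    have h := ENNReal.toReal_mono ENNReal.ofReal_ne_top (hup t ht)
    rw [ENNReal.toReal_ofReal (by positivity)] at h
    have h5 := mul_le_mul_of_nonneg_left h (pow_pos ht (m + 1)).le
    refine le_trans h5 (le_of_eq ?_)
    field_simp
end
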